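/- Let α = (α_1,…,α_r) be a composition of n with gcd(α_1,…,α_r)=1, let X be the set of α-necklaces, and write C(α;q) = Σ_i a_i q^i. Then (1/2)(C(α;1) + C(α;−1)) = a_0 + a_2 + a_4 + ⋯ equals the total number of bracelets, and (1/2)(C(α;1) − C(α;−1)) = a_1 + a_3 + a_5 + ⋯ equals the number of asymmetric bracelets. Equivalently, (X, C(α;q), τ_0) exhibits Stembridge's q=−1 phenomenon: C(α;−1) is the number of necklaces fixed by the reflection τ_0. -/

import Mathlib

open Polynomial in
/-- The q-analogue `[n]_q = 1 + q + ⋯ + q^{n-1}` as a polynomial in `ℤ[q]`. -/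
noncomputable def qInt (n : ℕ) : Polynomial ℤ := ∑ i ∈ Finset.range n, X ^ i

/-- The q-factorial `[n]!_q = [n]_q [n-1]_q ⋯ [1]_q`. -/
noncomputable def qFactorial : ℕ → Polynomial ℤ
  | 0 => 1
  | n + 1 => qInt (n + 1) * qFactorial n

/-- Words of content `α`: functions from the `n` cyclically-arranged positions `ℤ/nℤ` to the
letters `Fin r`, with exactly `α i` occurrences of each letter `i`. -/
def Words (n r : ℕ) [NeZero n] (α : Fin r → ℕ) : Type :=
  {w : ZMod n → Fin r // ∀ i : Fin r, (Finset.univ.filter fun x => w x = i).card = α i}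

/-- Two words are rotation-equivalent if one is obtained from the other by cyclically
rotating positions; the equivalence classes are the `α`-necklaces. -/
def neckSetoid (n r : ℕ) [NeZero n] (α : Fin r → ℕ) : Setoid (Words n r α) where
  r w w' := ∃ t : ZMod n, ∀ x : ZMod n, w'.1 x = w.1 (x + t)
  iseqv := by
    constructor
    · exact fun w => ⟨0, fun x => by rw [add_zero]⟩
    · rintro w w' ⟨t, ht⟩
      exact ⟨-t, fun x => by rw [ht (x + -t), neg_add_cancel_right]⟩
    · rintro w w' w'' ⟨t, ht⟩ ⟨s, hs⟩
      exact ⟨s + t, fun x => by rw [hs x, ht (x + s), add_assoc]⟩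

/-- Two words are bracelet-equivalent if one is obtained from the other by a rotation or by
a rotation composed with the reflection `τ₀ : x ↦ −x`; the classes are the bracelets,
i.e. the orbits of the `τ₀`-action on necklaces. -/
def braceSetoid (n r : ℕ) [NeZero n] (α : Fin r → ℕ) : Setoid (Words n r α) where
  r w w' := ∃ t : ZMod n,
    (∀ x : ZMod n, w'.1 x = w.1 (x + t)) ∨ (∀ x : ZMod n, w'.1 x = w.1 (t - x))
  iseqv := by
    constructor
    · exact fun w => ⟨0, Or.inl fun x => by rw [add_zero]⟩
    · rintro w w' ⟨t, ht | ht⟩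
      · exact ⟨-t, Or.inl fun x => by rw [ht (x + -t), neg_add_cancel_right]⟩
      · exact ⟨t, Or.inr fun x => by rw [ht (t - x), sub_sub_cancel]⟩
    · rintro w w' w'' ⟨t, ht | ht⟩ ⟨s, hs | hs⟩
      · exact ⟨s + t, Or.inl fun x => by rw [hs x, ht (x + s), add_assoc]⟩
      · exact ⟨t + s, Or.inr fun x => by rw [hs x, ht (s - x), sub_add_eq_add_sub, add_comm t s]⟩
      · exact ⟨t - s, Or.inr fun x => by rw [hs x, ht (x + s)]; ring_nf⟩
      · exact ⟨t - s, Or.inl fun x => by rw [hs x, ht (s - x)]; ring_nf⟩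

/-- A word is reflection-symmetric if some rotation of its reflection returns the word
itself: the necklace of `w` is fixed by the reflection `τ₀` iff `ReflSymm w`. -/
def ReflSymm {n r : ℕ} [NeZero n] {α : Fin r → ℕ} (w : Words n r α) : Prop :=
  ∃ t : ZMod n, ∀ x : ZMod n, w.1 (t - x) = w.1 x

/-!
Since `gcd α = 1`, no word of content `α` has a nonzero period. Hence every necklace consists of
`n` words, and a word symmetric under some reflection `x ↦ t - x` determines its `t`; so symmetric
words can be counted separately for each `t`. A word invariant under an involution is a free choice
of letters on the fixed points and on half of the remaining points. As `x ↦ t - x` has at most two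
fixed points and at least one letter has odd multiplicity, by parity the fixed points must carry
exactly the letters of odd multiplicity, once each, and the other half has content `⌊α / 2⌋`.
There are `f ! = f` ways to place the odd letters on `f ∈ {1, 2}` fixed points, and these `f` add
up to `n` over all `t`, so dividing by the `n` words of each necklace leaves the multinomial
coefficient of `⌊α / 2⌋`, or `0` if more than two letters have odd multiplicity.

On the polynomial side, `[m]!_q` vanishes at `q = -1` to order `⌊m / 2⌋` with leading coefficient
`⌊m / 2⌋!` in powers of `1 + q`, which gives the same value for `C(α; -1)`. The bracelet counts
follow because an involution with `a` fixed points and `b` two-element orbits acts on a set of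
`a + 2 * b` elements with `a + b` orbits.
-/

section Counting

open Function

variable {X Y : Type*}

theorem card_subtype_comp_eq_mul [Finite X] [Finite Y] (f : X → Y) {p : Y → Prop} {k : ℕ}
    (hf : ∀ y, p y → Nat.card {x // f x = y} = k) :
    Nat.card {x // p (f x)} = Nat.card {y // p y} * k := by
  have := Fintype.ofFinite {y // p y}
  rw [← Nat.card_congr (Equiv.sigmaSubtypeFiberEquivSubtype f fun _ => Iff.rfl), Nat.card_sigma,
    Finset.sum_congr rfl fun (y : {y // p y}) _ => hf y y.2, Finset.sum_const, Finset.card_univ,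
    Nat.card_eq_fintype_card, smul_eq_mul]

theorem card_eq_card_subtype_add_card_subtype_not [Finite X] (p : X → Prop) :
    Nat.card X = Nat.card {x // p x} + Nat.card {x // ¬ p x} := by
  classical rw [← Nat.card_congr (Equiv.sumCompl p), Nat.card_sum]

section Quotient

variable {s : X → X} {f : X → Y}

theorem forall_fiber_apply_ne_iff (hs : Involutive s)
    (hf : ∀ x y, f x = f y ↔ y = x ∨ y = s x) (x : X) :
    (∀ y, f y = f x → s y ≠ y) ↔ s x ≠ x := by
  refine ⟨fun h => h x rfl, fun hx y hy => ?_⟩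
  rcases (hf x y).1 hy.symm with rfl | rfl
  · exact hx
  · rwa [hs x, ne_comm]

variable [Finite X] [Finite Y]

theorem card_eq_card_fixedPoints_add (hs : Involutive s)
    (hf : ∀ x y, f x = f y ↔ y = x ∨ y = s x)
    (hsurj : Surjective f) :
    Nat.card Y = Nat.card (fixedPoints s) + Nat.card {y // ∀ x, f x = y → s x ≠ x} := by
  have hfib : ∀ y, (¬ ∀ x, f x = y → s x ≠ x) → Nat.card {x // f x = y} = 1 := by
    intro y hy
    obtain ⟨x, rfl⟩ := hsurj y
    have hx : s x = x := by simpa [forall_fiber_apply_ne_iff hs hf] using hy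
    simp [eq_comm (b := f x), hf x, hx]
  have hfix := card_subtype_comp_eq_mul f hfib
  simp only [forall_fiber_apply_ne_iff hs hf, not_not, mul_one] at hfix
  rw [card_eq_card_subtype_add_card_subtype_not fun y => ∀ x, f x = y → s x ≠ x, ← hfix, add_comm]
  rfl

theorem card_eq_card_fixedPoints_add_two_mul (hs : Involutive s)
    (hf : ∀ x y, f x = f y ↔ y = x ∨ y = s x)
    (hsurj : Surjective f) :
    Nat.card X = Nat.card (fixedPoints s) + 2 * Nat.card {y // ∀ x, f x = y → s x ≠ x} := by
  have hfib : ∀ y, (∀ x, f x = y → s x ≠ x) → Nat.card {x // f x = y} = 2 := by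
    intro y hy
    obtain ⟨x, rfl⟩ := hsurj y
    simp only [eq_comm (b := f x), hf x]
    exact Set.ncard_pair (hy x rfl).symm
  have hfree := card_subtype_comp_eq_mul f hfib
  simp only [forall_fiber_apply_ne_iff hs hf] at hfree
  rw [card_eq_card_subtype_add_card_subtype_not fun x => s x = x, mul_comm, ← hfree]
  rfl

end Quotient

/-- `T` contains exactly one point of every two-element orbit of the involution `s`, and no fixed
point: the fixed points, `T` and the image of `T` under `s` partition the type. -/
def IsPairTransversal (s : X → X) (T : Set X) : Prop :=
  Bijective (Sum.elim (↑) (Sum.elim (↑) fun x => s x) : fixedPoints s ⊕ (T ⊕ T) → X)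

theorem exists_isPairTransversal {s : X → X} (hs : Involutive s) :
    ∃ T : Set X, IsPairTransversal s T := by
  classical
  let _ : LinearOrder X := linearOrderOfSTO WellOrderingRel
  refine ⟨{x | x < s x}, ?_, fun x => ?_⟩
  · refine Subtype.val_injective.sumElim
      (Subtype.val_injective.sumElim (hs.injective.comp Subtype.val_injective) ?_) ?_
    · rintro ⟨x, hx : x < s x⟩ ⟨y, hy : y < s y⟩ (rfl : x = s y)
      exact hy.asymm (by rwa [hs y] at hx)
    · rintro ⟨x, hx : s x = x⟩ (⟨y, hy : y < s y⟩ | ⟨y, hy : y < s y⟩)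
      · rintro (rfl : x = y)
        exact hy.ne' hx
      · rintro (rfl : x = s y)
        exact hy.ne (by rwa [hs y] at hx)
  · rcases lt_trichotomy x (s x) with hx | hx | hx
    · exact ⟨.inr (.inl ⟨x, hx⟩), rfl⟩
    · exact ⟨.inl ⟨x, hx.symm⟩, rfl⟩
    · exact ⟨.inr (.inr ⟨s x, by simpa [hs x]⟩), hs x⟩

namespace IsPairTransversal

variable {s : X → X} {T : Set X}

/-- The decomposition of the type into the fixed points, `T` and the image of `T` under `s`. -/
noncomputable def equiv (hT : IsPairTransversal s T) : fixedPoints s ⊕ (T ⊕ T) ≃ X :=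
  Equiv.ofBijective _ hT

theorem card_eq [Finite X] (hT : IsPairTransversal s T) :
    Nat.card X = Nat.card (fixedPoints s) + 2 * Nat.card T := by
  rw [← Nat.card_congr hT.equiv, Nat.card_sum, Nat.card_sum, two_mul]

end IsPairTransversal

end Counting

section Content

open Function

variable {ι ι' κ : Type*}

/-- The content of a word `w`: the number of occurrences of each letter. Counting with `Nat.card`
avoids decidability instances; on an infinite set of positions an infinite count is `0`. -/
noncomputable def content (w : ι → κ) (i : κ) : ℕ :=
  Nat.card {x // w x = i}

theorem content_comp_equiv (w : ι → κ) (e : ι' ≃ ι) : content (w ∘ e) = content w :=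
  funext fun _ => Nat.card_congr (e.subtypeEquiv fun _ => Iff.rfl)

theorem content_sumElim [Finite ι] [Finite ι'] (u : ι → κ) (v : ι' → κ) :
    content (Sum.elim u v) = content u + content v :=
  funext fun _ => by
    rw [content, Nat.card_congr Equiv.subtypeSum, Nat.card_sum]
    rfl

theorem sum_content [Finite ι] [Fintype κ] (w : ι → κ) : ∑ i, content w i = Nat.card ι := by
  rw [← Nat.card_congr (Equiv.sigmaFiberEquiv w), Nat.card_sigma]
  rfl

theorem exists_content_eq [Finite ι] [Fintype κ] {α : κ → ℕ} (hα : ∑ i, α i = Nat.card ι) :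
    ∃ w : ι → κ, content w = α := by
  obtain ⟨e⟩ : Nonempty (ι ≃ Σ i, Fin (α i)) := Finite.card_eq.1 (by simp [hα])
  refine ⟨fun x => (e x).1, ?_⟩
  rw [← Function.comp_def Sigma.fst e, content_comp_equiv]
  exact funext fun i => (Nat.card_congr (Equiv.sigmaSubtype i)).trans (Nat.card_fin _)

theorem exists_perm_comp_eq [Finite ι] {w w' : ι → κ} (h : content w = content w') :
    ∃ g : Equiv.Perm ι, w' ∘ g = w := by
  have e (i) : Nonempty ({x // w x = i} ≃ {x // w' x = i}) :=
    Finite.card_eq.1 (congrFun h i)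
  exact ⟨Equiv.ofFiberEquiv fun i => (e i).some, funext fun x => Equiv.ofFiberEquiv_map _ x⟩

theorem card_perm_comp_eq [Finite ι] [Fintype κ] {w w' : ι → κ} (h : content w = content w') :
    Nat.card {g : Equiv.Perm ι // w' ∘ g = w} = ∏ i, (content w i).factorial := by
  obtain ⟨g, rfl⟩ := exists_perm_comp_eq h
  rw [h, Nat.card_congr ((Equiv.mulRight g⁻¹).subtypeEquiv
    (q := fun k : Equiv.Perm ι => w' ∘ k = w') fun k => ?_)]
  · exact DomMulAct.stabilizer_ncard w'
  · exact (Equiv.comp_symm_eq g w' (w' ∘ k)).symm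

/-- The group of permutations of the positions acts transitively on the words of content `α`, and
its stabilizers are Young subgroups. -/
theorem card_content_eq_mul_prod_factorial [Finite ι] [Fintype κ] {α : κ → ℕ}
    (hα : ∑ i, α i = Nat.card ι) :
    Nat.card {w : ι → κ // content w = α} * ∏ i, (α i).factorial = (Nat.card ι).factorial := by
  obtain ⟨w₀, rfl⟩ := exists_content_eq hα
  rw [← card_subtype_comp_eq_mul (fun g : Equiv.Perm ι => w₀ ∘ g), ← Nat.card_perm]
  · exact Nat.card_congr (Equiv.subtypeUnivEquiv fun g => content_comp_equiv w₀ g)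
  · rintro w hw
    rw [card_perm_comp_eq hw, hw]

namespace IsPairTransversal

variable {s : ι → ι} {T : Set ι}

theorem apply_equiv (hT : IsPairTransversal s T) (hs : Involutive s)
    (x : fixedPoints s ⊕ (T ⊕ T)) : s (hT.equiv x) = hT.equiv (x.map id Sum.swap) := by
  rcases x with x | x | x
  · exact x.2
  · rfl
  · exact hs x

theorem comp_equiv (hT : IsPairTransversal s T) {w : ι → κ} (hw : w ∘ s = w) :
    w ∘ hT.equiv = Sum.elim (w ∘ (↑)) (Sum.elim (w ∘ (↑)) (w ∘ (↑))) := by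
  ext (x | x | x)
  · rfl
  · rfl
  · exact congrFun hw x

theorem content_eq [Finite ι] (hT : IsPairTransversal s T) {w : ι → κ} (hw : w ∘ s = w) :
    content w = content (fun x : fixedPoints s => w x) + 2 • content fun x : T => w x := by
  rw [← content_comp_equiv w hT.equiv, hT.comp_equiv hw, content_sumElim, content_sumElim,
    two_nsmul]
  rfl

/-- A word invariant under an involution is an arbitrary word on the fixed points together with an
arbitrary word on a transversal of the two-element orbits. -/
noncomputable def invariantEquiv (hT : IsPairTransversal s T) (hs : Involutive s) :
    {w : ι → κ // w ∘ s = w} ≃ (fixedPoints s → κ) × (T → κ) where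
  toFun w := (fun x => w.1 x, fun x => w.1 x)
  invFun p := ⟨Sum.elim p.1 (Sum.elim p.2 p.2) ∘ hT.equiv.symm, by
    rw [← hT.equiv.surjective.injective_comp_right.eq_iff]
    ext (x | x | x) <;> simp [hT.apply_equiv hs]⟩
  left_inv w := Subtype.ext <| (hT.equiv.comp_symm_eq _ _).2 (hT.comp_equiv w.2).symm
  right_inv p := Prod.ext
    (funext fun x => congrArg _ (hT.equiv.symm_apply_apply (.inl x)))
    (funext fun x => congrArg _ (hT.equiv.symm_apply_apply (.inr (.inl x))))

end IsPairTransversal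

section Parity

variable {κ : Type*} [Fintype κ]

theorem sum_mod_two_add_two_mul_sum_div_two (α : κ → ℕ) :
    ∑ i, α i % 2 + 2 * ∑ i, α i / 2 = ∑ i, α i := by
  simp only [Finset.mul_sum, ← Finset.sum_add_distrib, Nat.mod_add_div]

theorem sum_mod_two_le_of_add_two_nsmul_eq {α β γ : κ → ℕ} (h : β + 2 • γ = α) :
    ∑ i, α i % 2 ≤ ∑ i, β i := by
  subst h
  exact Finset.sum_le_sum fun _ _ => by simp [Nat.mod_le]

theorem add_two_nsmul_eq_iff {α β γ : κ → ℕ} (hβ : ∑ i, β i = ∑ i, α i % 2) :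
    β + 2 • γ = α ↔ (β = fun i => α i % 2) ∧ γ = fun i => α i / 2 := by
  refine ⟨?_, ?_⟩
  · rintro rfl
    have hmod : β = fun i => (β + 2 • γ) i % 2 := by
      refine funext fun i => Eq.symm ?_
      refine (Finset.sum_eq_sum_iff_of_le fun _ _ => ?_).1 hβ.symm i (Finset.mem_univ i)
      simp [Nat.mod_le]
    refine ⟨hmod, funext fun i => ?_⟩
    have := congrFun hmod i
    simp only [Pi.add_apply, Pi.smul_apply, smul_eq_mul] at this ⊢
    omega
  · rintro ⟨rfl, rfl⟩
    exact funext fun i => Nat.mod_add_div (α i) 2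

theorem prod_factorial_mod_two (α : κ → ℕ) : ∏ i, (α i % 2).factorial = 1 :=
  Finset.prod_eq_one fun _ _ => Nat.factorial_eq_one.2 (Nat.le_of_lt_succ (Nat.mod_lt _ two_pos))

theorem sum_mod_two_pos_of_gcd_eq_one {α : κ → ℕ} (hgcd : Finset.univ.gcd α = 1) :
    0 < ∑ i, α i % 2 := by
  refine Nat.pos_of_ne_zero fun h => Nat.prime_two.not_dvd_one ?_
  exact (Finset.dvd_gcd fun i hi =>
    Nat.dvd_of_mod_eq_zero (Finset.sum_eq_zero_iff.1 h i hi)).trans hgcd.dvd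

end Parity

section Invariant

variable [Finite ι] [Fintype κ] {s : ι → ι} {α : κ → ℕ}

theorem sum_content_mod_two_le_card_fixedPoints (hs : Involutive s) {w : ι → κ} (hw : w ∘ s = w) :
    ∑ i, content w i % 2 ≤ Nat.card (fixedPoints s) := by
  obtain ⟨T, hT⟩ := exists_isPairTransversal hs
  rw [← sum_content fun x : fixedPoints s => w x]
  exact sum_mod_two_le_of_add_two_nsmul_eq (hT.content_eq hw).symm

/-- When there are as many fixed points as letters of odd multiplicity, every such letter occurs
exactly once among the fixed points. -/
theorem card_invariant_mul_prod_factorial (hs : Involutive s) (hα : ∑ i, α i = Nat.card ι)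
    (hodd : ∑ i, α i % 2 = Nat.card (fixedPoints s)) :
    Nat.card {w : ι → κ // w ∘ s = w ∧ content w = α} * ∏ i, (α i / 2).factorial =
      (Nat.card (fixedPoints s)).factorial * (∑ i, α i / 2).factorial := by
  obtain ⟨T, hT⟩ := exists_isPairTransversal hs
  have hcardT : ∑ i, α i / 2 = Nat.card T := by
    have := hT.card_eq
    have := sum_mod_two_add_two_mul_sum_div_two α
    omega
  have hcontent (w : {w : ι → κ // w ∘ s = w}) : content w.1 = α ↔
      (content (hT.invariantEquiv hs w).1 = fun i => α i % 2) ∧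
        content (hT.invariantEquiv hs w).2 = fun i => α i / 2 := by
    rw [hT.content_eq w.2]
    exact add_two_nsmul_eq_iff ((sum_content _).trans hodd.symm)
  have e : {w : ι → κ // w ∘ s = w ∧ content w = α} ≃
      {f : fixedPoints s → κ // content f = fun i => α i % 2} ×
        {u : T → κ // content u = fun i => α i / 2} :=
    (Equiv.subtypeSubtypeEquivSubtypeInter _ _).symm.trans
      (((hT.invariantEquiv hs).subtypeEquiv hcontent).trans Equiv.subtypeProdEquivProd)
  rw [Nat.card_congr e, Nat.card_prod, mul_assoc, card_content_eq_mul_prod_factorial hcardT,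
    ← card_content_eq_mul_prod_factorial hodd, prod_factorial_mod_two, mul_one, hcardT]

end Invariant

end Content

section Symmetry

open Function

variable {G κ : Type*}

theorem content_eq_addOrderOf_smul [AddGroup G] {w : G → κ} {t : G} (ht : Periodic w t) :
    content w = addOrderOf t • content ht.lift := by
  ext i
  rw [← Nat.card_zmultiples]
  exact (Nat.card_congr (QuotientAddGroup.preimageMkEquivAddSubgroupProdSet _
    {q | ht.lift q = i})).trans (Nat.card_prod _ _)

variable [Fintype κ]

theorem eq_zero_of_periodic [AddGroup G] {w : G → κ} (hgcd : Finset.univ.gcd (content w) = 1)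
    {t : G} (ht : Periodic w t) : t = 0 := by
  rw [← AddMonoid.addOrderOf_eq_one_iff, ← Nat.dvd_one, ← hgcd]
  exact Finset.dvd_gcd fun i _ => ⟨_, congrFun (content_eq_addOrderOf_smul ht) i⟩

section Reflection

variable [AddCommGroup G]

theorem reflection_center_unique {w : G → κ} (hgcd : Finset.univ.gcd (content w) = 1)
    {t t' : G} (ht : (w ∘ fun x => t - x) = w) (ht' : (w ∘ fun x => t' - x) = w) : t = t' := by
  refine sub_eq_zero.1 (eq_zero_of_periodic hgcd fun x => ?_)
  rw [← congrFun ht, ← congrFun ht' x]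
  exact congrArg w (by simp; abel)

theorem card_symmetric_eq_sum [Fintype G] {α : κ → ℕ} (hgcd : Finset.univ.gcd α = 1) :
    Nat.card {w : G → κ // content w = α ∧ ∃ t, (w ∘ fun x => t - x) = w} =
      ∑ t : G, Nat.card {w : G → κ // (w ∘ fun x => t - x) = w ∧ content w = α} := by
  let forgetCenter (p : Σ t : G, {w : G → κ // (w ∘ fun x => t - x) = w ∧ content w = α}) :
      {w : G → κ // content w = α ∧ ∃ t, (w ∘ fun x => t - x) = w} :=
    ⟨p.2.1, p.2.2.2, p.1, p.2.2.1⟩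
  have hbij : Bijective forgetCenter := by
    constructor
    · rintro ⟨t, w, hw, rfl⟩ ⟨t', w', hw', _⟩ h
      obtain rfl : w = w' := congrArg Subtype.val h
      obtain rfl := reflection_center_unique hgcd hw hw'
      rfl
    · rintro ⟨w, hα, t, hw⟩
      exact ⟨⟨t, w, hw, hα⟩, rfl⟩
  rw [← Nat.card_congr (Equiv.ofBijective _ hbij), Nat.card_sigma]

theorem sum_card_fixedPoints_sub [Fintype G] :
    ∑ t : G, Nat.card (fixedPoints fun x : G => t - x) = Nat.card G := by
  rw [← Nat.card_sigma, ← Nat.card_congr (Equiv.sigmaFiberEquiv fun x : G => x + x)]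
  simp only [fixedPoints, IsFixedPt, sub_eq_iff_eq_add, eq_comm (b := _ + _)]
  rfl

theorem card_fixedPoints_sub_le_two [Finite G] [IsAddCyclic G] (t : G) :
    Nat.card (fixedPoints fun x => t - x) ≤ 2 := by
  classical
  have := Fintype.ofFinite G
  rcases isEmpty_or_nonempty (fixedPoints fun x => t - x) with h | ⟨y, hy : t - y = y⟩
  · simp
  have htwo (x : fixedPoints fun x => t - x) : (2 : ℕ) • ((x : G) - y) = 0 := by
    have hx : t = x + x := sub_eq_iff_eq_add.1 x.2
    rw [nsmul_sub, two_nsmul, two_nsmul, ← hx, ← sub_eq_iff_eq_add.1 hy, sub_self]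
  refine le_trans ?_ (IsAddCyclic.card_nsmul_eq_zero_le (α := G) two_pos)
  rw [← Fintype.card_subtype, ← Nat.card_eq_fintype_card]
  exact Nat.card_le_card_of_injective (fun x => ⟨x - y, htwo x⟩) fun x x' h =>
    Subtype.ext (sub_left_injective (congrArg Subtype.val h))

theorem card_reflection_invariant_mul [Finite G] [IsAddCyclic G] {α : κ → ℕ}
    (hα : ∑ i, α i = Nat.card G) (hodd : 0 < ∑ i, α i % 2) (t : G) :
    Nat.card {w : G → κ // (w ∘ fun x => t - x) = w ∧ content w = α} *
        ∏ i, (α i / 2).factorial =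
      Nat.card (fixedPoints fun x => t - x) *
        if ∑ i, α i % 2 ≤ 2 then (∑ i, α i / 2).factorial else 0 := by
  have hs : Involutive fun x => t - x := sub_sub_cancel t
  have hle := card_fixedPoints_sub_le_two t
  obtain ⟨T, hT⟩ := exists_isPairTransversal hs
  have hcard := hT.card_eq
  have hsum := sum_mod_two_add_two_mul_sum_div_two α
  rcases lt_or_ge (Nat.card (fixedPoints fun x => t - x)) (∑ i, α i % 2) with hlt | hge
  · have : IsEmpty {w : G → κ // (w ∘ fun x => t - x) = w ∧ content w = α} := by
      refine ⟨fun w => hlt.not_ge ?_⟩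
      simpa only [w.2.2] using sum_content_mod_two_le_card_fixedPoints hs w.2.1
    rw [Nat.card_of_isEmpty, zero_mul, eq_comm, mul_eq_zero, ite_eq_right_iff]
    omega
  · have heq : ∑ i, α i % 2 = Nat.card (fixedPoints fun x => t - x) := by omega
    have hfact : (Nat.card (fixedPoints fun x => t - x)).factorial =
        Nat.card (fixedPoints fun x => t - x) := by
      rcases (by omega : Nat.card (fixedPoints fun x => t - x) = 1 ∨
        Nat.card (fixedPoints fun x => t - x) = 2) with h | h <;> rw [h] <;> rfl
    rw [card_invariant_mul_prod_factorial hs hα heq, if_pos (heq ▸ hle), hfact]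

theorem card_symmetric_mul_prod_factorial [Finite G] [IsAddCyclic G] {α : κ → ℕ}
    (hα : ∑ i, α i = Nat.card G) (hgcd : Finset.univ.gcd α = 1) :
    Nat.card {w : G → κ // content w = α ∧ ∃ t, (w ∘ fun x => t - x) = w} *
        ∏ i, (α i / 2).factorial =
      Nat.card G * if ∑ i, α i % 2 ≤ 2 then (∑ i, α i / 2).factorial else 0 := by
  have := Fintype.ofFinite G
  rw [card_symmetric_eq_sum hgcd, Finset.sum_mul,
    Finset.sum_congr rfl fun t _ =>
      card_reflection_invariant_mul hα (sum_mod_two_pos_of_gcd_eq_one hgcd) t,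
    ← Finset.sum_mul, sum_card_fixedPoints_sub]

end Reflection

end Symmetry

section QAnalogue

open Polynomial

theorem eval_one_qInt (n : ℕ) : (qInt n).eval 1 = n := by
  simp [qInt, eval_finsetSum]

theorem eval_one_qFactorial (n : ℕ) : (qFactorial n).eval 1 = n.factorial := by
  induction n with
  | zero => simp [qFactorial]
  | succ n ih => simp [qFactorial, Nat.factorial_succ, eval_one_qInt, ih]

theorem qInt_ne_zero {n : ℕ} (hn : n ≠ 0) : qInt n ≠ 0 := fun h =>
  hn <| by simpa [h, eq_comm] using eval_one_qInt n

theorem qInt_two_mul (k : ℕ) : qInt (2 * k) = (1 + X) * expand ℤ 2 (qInt k) := by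
  simp only [qInt, map_sum, map_pow, expand_X]
  induction k with
  | zero => simp
  | succ k ih =>
    rw [mul_add_one, Finset.sum_range_succ, Finset.sum_range_succ, ih, Finset.sum_range_succ]
    ring

theorem qInt_two_mul_add_one (k : ℕ) : qInt (2 * k + 1) = qInt (2 * k) + X ^ (2 * k) :=
  Finset.sum_range_succ _ _

theorem eval_neg_one_qInt_odd (k : ℕ) : (qInt (2 * k + 1)).eval (-1) = 1 := by
  rw [qInt_two_mul_add_one, qInt_two_mul]
  simp

theorem qFactorial_two_mul_succ (k : ℕ) :
    qFactorial (2 * (k + 1)) =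
      (1 + X) * (expand ℤ 2 (qInt (k + 1)) * qInt (2 * k + 1)) * qFactorial (2 * k) := by
  rw [show 2 * (k + 1) = 2 * k + 1 + 1 from rfl, qFactorial, qFactorial,
    show 2 * k + 1 + 1 = 2 * (k + 1) from rfl, qInt_two_mul]
  ring

theorem exists_qFactorial_two_mul_eq (k : ℕ) : ∃ R : ℤ[X],
    qFactorial (2 * k) = (1 + X) ^ k * R ∧ R.eval (-1) = k.factorial := by
  induction k with
  | zero => exact ⟨1, by simp [qFactorial]⟩
  | succ k ih =>
    obtain ⟨R, hR, hR1⟩ := ih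
    refine ⟨expand ℤ 2 (qInt (k + 1)) * qInt (2 * k + 1) * R, ?_, ?_⟩
    · rw [qFactorial_two_mul_succ, hR]
      ring
    · simp [hR1, eval_neg_one_qInt_odd, expand_eval, eval_one_qInt, Nat.factorial_succ]

theorem exists_qFactorial_eq (m : ℕ) : ∃ R : ℤ[X],
    qFactorial m = (1 + X) ^ (m / 2) * R ∧ R.eval (-1) = (m / 2).factorial := by
  rcases Nat.even_or_odd' m with ⟨k, rfl | rfl⟩
  · simpa using exists_qFactorial_two_mul_eq k
  · obtain ⟨R, hR, hR1⟩ := exists_qFactorial_two_mul_eq k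
    rw [show (2 * k + 1) / 2 = k by omega]
    exact ⟨qInt (2 * k + 1) * R, by rw [qFactorial, hR]; ring,
      by rw [eval_mul, eval_neg_one_qInt_odd, hR1, one_mul]⟩

section Multinomial

variable {κ : Type*} [Fintype κ] {α : κ → ℕ} {C : ℤ[X]}

theorem eval_one_mul_prod_factorial {n : ℕ}
    (hC : qInt n * C * ∏ i, qFactorial (α i) = qFactorial n) :
    n * C.eval 1 * (∏ i, (α i).factorial : ℕ) = n.factorial := by
  simpa [eval_prod, eval_one_qInt, eval_one_qFactorial] using congrArg (eval 1) hC

theorem mul_prod_qFactorial_eq {m : ℕ}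
    (hC : qInt (m + 1) * C * ∏ i, qFactorial (α i) = qFactorial (m + 1)) :
    C * ∏ i, qFactorial (α i) = qFactorial m := by
  rw [qFactorial, mul_assoc] at hC
  exact mul_left_cancel₀ (qInt_ne_zero m.succ_ne_zero) hC

theorem eval_neg_one_mul_prod_factorial_of_div_two_eq {m d : ℕ}
    (hC : C * ∏ i, qFactorial (α i) = qFactorial m)
    (hd : m / 2 = ∑ i, α i / 2 + d) :
    C.eval (-1) * (∏ i, (α i / 2).factorial : ℕ) = 0 ^ d * ((m / 2).factorial : ℤ) := by
  choose R hR hR1 using exists_qFactorial_eq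
  have hX : (1 + X : ℤ[X]) ≠ 0 := add_comm X (1 : ℤ[X]) ▸ X_add_C_ne_zero 1
  have hCR : C * ∏ i, R (α i) = (1 + X) ^ d * R m := by
    refine mul_left_cancel₀ (pow_ne_zero (∑ i, α i / 2) hX) ?_
    rw [← mul_assoc _ _ (R m), ← pow_add, ← hd, ← hR, ← hC,
      Finset.prod_congr rfl fun i _ => hR (α i),
      Finset.prod_mul_distrib, Finset.prod_pow_eq_pow_sum, mul_left_comm]
  simpa [eval_prod, hR1] using congrArg (eval (-1)) hCR

theorem eval_neg_one_mul_prod_factorial {n : ℕ} (hn : n ≠ 0) (hα : ∑ i, α i = n)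
    (hodd : 0 < ∑ i, α i % 2) (hC : qInt n * C * ∏ i, qFactorial (α i) = qFactorial n) :
    C.eval (-1) * (∏ i, (α i / 2).factorial : ℕ) =
      if ∑ i, α i % 2 ≤ 2 then ((∑ i, α i / 2).factorial : ℤ) else 0 := by
  obtain ⟨m, rfl⟩ := Nat.exists_eq_succ_of_ne_zero hn
  have hsum := sum_mod_two_add_two_mul_sum_div_two α
  obtain ⟨d, hd⟩ : ∃ d, m / 2 = ∑ i, α i / 2 + d := Nat.exists_eq_add_of_le (by omega)
  rw [eval_neg_one_mul_prod_factorial_of_div_two_eq (mul_prod_qFactorial_eq hC) hd]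
  split_ifs with h
  · obtain rfl : d = 0 := by omega
    simp [hd]
  · rw [zero_pow (by omega), zero_mul]

end Multinomial

section Parity

variable {R : Type*} [Ring R] (P : R[X])

theorem eval_one_eq_sum_even_add_sum_odd : P.eval 1 =
    (∑ i ∈ Finset.range (P.natDegree + 1), if Even i then P.coeff i else 0) +
      ∑ i ∈ Finset.range (P.natDegree + 1), if ¬ Even i then P.coeff i else 0 := by
  rw [eval_eq_sum_range, ← Finset.sum_add_distrib]
  exact Finset.sum_congr rfl fun i _ => by split_ifs <;> simp

theorem eval_neg_one_eq_sum_even_sub_sum_odd : P.eval (-1) =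
    (∑ i ∈ Finset.range (P.natDegree + 1), if Even i then P.coeff i else 0) -
      ∑ i ∈ Finset.range (P.natDegree + 1), if ¬ Even i then P.coeff i else 0 := by
  rw [eval_eq_sum_range, ← Finset.sum_sub_distrib]
  refine Finset.sum_congr rfl fun i _ => ?_
  by_cases hi : Even i
  · simp [hi]
  · simp [hi, (Nat.not_even_iff_odd.1 hi).neg_one_pow]

end Parity

end QAnalogue

section Necklace

open Function

variable {n r : ℕ} [NeZero n] {α : Fin r → ℕ}

namespace Words

theorem content_eq_iff {w : ZMod n → Fin r} :
    content w = α ↔ ∀ i, (Finset.univ.filter fun x => w x = i).card = α i := by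
  simp only [funext_iff, content, Nat.card_eq_fintype_card, Fintype.card_subtype]

theorem content_eq (w : Words n r α) : content w.1 = α :=
  content_eq_iff.2 w.2

protected theorem ext {w w' : Words n r α} (h : ∀ x, w.1 x = w'.1 x) : w = w' :=
  Subtype.ext (funext h)

instance : Finite (Words n r α) :=
  Subtype.finite

theorem card_mul_prod_factorial (hα : ∑ i, α i = n) :
    Nat.card (Words n r α) * ∏ i, (α i).factorial = n.factorial := by
  have h := card_content_eq_mul_prod_factorial (hα.trans (Nat.card_zmod n).symm)
  rw [Nat.card_zmod] at h
  rw [← h]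
  exact congrArg (· * _) (Nat.card_congr (Equiv.subtypeEquivRight fun _ => content_eq_iff.symm))

theorem card_reflSymm_mul_prod_factorial (hα : ∑ i, α i = n) (hgcd : Finset.univ.gcd α = 1) :
    Nat.card {w : Words n r α // ReflSymm w} * ∏ i, (α i / 2).factorial =
      n * if ∑ i, α i % 2 ≤ 2 then (∑ i, α i / 2).factorial else 0 := by
  have h := card_symmetric_mul_prod_factorial (hα.trans (Nat.card_zmod n).symm) hgcd
  have e : {w : Words n r α // ReflSymm w} ≃
      {w : ZMod n → Fin r // content w = α ∧ ∃ t, (w ∘ fun x => t - x) = w} :=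
    (Equiv.subtypeSubtypeEquivSubtypeInter _
      fun w : ZMod n → Fin r => ∃ t, ∀ x, w (t - x) = w x).trans
      (Equiv.subtypeEquivRight fun _ =>
        and_congr content_eq_iff.symm (exists_congr fun _ => funext_iff.symm))
  rw [Nat.card_zmod] at h
  rw [Nat.card_congr e, h]

/-- The word read off along a permutation of the positions. -/
def reindex (e : Equiv.Perm (ZMod n)) (w : Words n r α) : Words n r α :=
  ⟨w.1 ∘ e, content_eq_iff.1 ((content_comp_equiv w.1 e).trans w.content_eq)⟩

/-- The rotation of a word by `t` positions, the action of `c ^ t`. -/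
def rotate (t : ZMod n) : Words n r α → Words n r α :=
  reindex (Equiv.addRight t)

/-- The reflection of a word, the action of `τ₀`. -/
def reflect : Words n r α → Words n r α :=
  reindex (Equiv.neg (ZMod n))

theorem reflect_reflect (w : Words n r α) : w.reflect.reflect = w :=
  Words.ext fun x => congrArg w.1 (neg_neg x)

theorem rotate_injective (hgcd : Finset.univ.gcd α = 1) (w : Words n r α) :
    Injective fun t => w.rotate t := by
  intro t t' h
  refine sub_eq_zero.1 (eq_zero_of_periodic (w.content_eq.symm ▸ hgcd) fun x => ?_)
  have hx : w.1 (x - t' + t) = w.1 (x - t' + t') := congrFun (congrArg Subtype.val h) (x - t')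
  rwa [sub_add_cancel, sub_add_eq_add_sub, add_sub_assoc] at hx

end Words

/-- The `α`-necklaces: orbits of words of content `α` under rotation. -/
abbrev Necklace (n r : ℕ) [NeZero n] (α : Fin r → ℕ) : Type :=
  Quotient (neckSetoid n r α)

theorem neckSetoid_iff {w w' : Words n r α} : neckSetoid n r α w w' ↔ ∃ t, w.rotate t = w' :=
  exists_congr fun _ => ⟨fun h => Words.ext fun x => (h x).symm, fun h _ => h ▸ rfl⟩

theorem neckSetoid_reflect_iff {w w' : Words n r α} :
    neckSetoid n r α w.reflect w' ↔ ∃ t, ∀ x, w'.1 x = w.1 (t - x) :=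
  (Equiv.neg (ZMod n)).exists_congr fun t => forall_congr' fun x => by
    change _ = w.1 (-(x + t)) ↔ _ = w.1 (-t - x)
    rw [neg_add_rev, ← sub_eq_add_neg]

theorem braceSetoid_iff {w w' : Words n r α} :
    braceSetoid n r α w w' ↔ neckSetoid n r α w w' ∨ neckSetoid n r α w.reflect w' :=
  exists_or.trans (or_congr_right neckSetoid_reflect_iff.symm)

theorem reflSymm_iff {w : Words n r α} : ReflSymm w ↔ neckSetoid n r α w.reflect w := by
  simp only [neckSetoid_reflect_iff, ReflSymm, eq_comm]

namespace Necklace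

theorem card_fiber (hgcd : Finset.univ.gcd α = 1) (N : Necklace n r α) :
    Nat.card {w // Quotient.mk (neckSetoid n r α) w = N} = n := by
  obtain ⟨w, rfl⟩ := Quotient.exists_rep N
  simp only [eq_comm (b := Quotient.mk _ w), Quotient.eq, neckSetoid_iff]
  exact (Nat.card_range_of_injective (w.rotate_injective hgcd)).trans (Nat.card_zmod n)

/-- The action of `τ₀` on necklaces. -/
def reflect : Necklace n r α → Necklace n r α :=
  Quotient.map Words.reflect fun w w' ⟨t, ht⟩ => ⟨-t, fun x => by
    refine (ht (-x)).trans (congrArg w.1 ?_)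
    change -x + t = -(x + -t)
    abel⟩

theorem reflect_mk_eq_iff (w : Words n r α) :
    reflect (Quotient.mk (neckSetoid n r α) w) = Quotient.mk (neckSetoid n r α) w ↔ ReflSymm w :=
  Quotient.eq.trans reflSymm_iff.symm

theorem reflect_involutive : Involutive (reflect : Necklace n r α → Necklace n r α) :=
  Quotient.ind fun w : Words n r α => congrArg (Quotient.mk _) w.reflect_reflect

/-- The bracelet of a necklace. -/
def toBracelet : Necklace n r α → Quotient (braceSetoid n r α) :=
  Quotient.map id fun _ _ h => braceSetoid_iff.2 (.inl h)

theorem toBracelet_surjective :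
    Surjective (toBracelet : Necklace n r α → Quotient (braceSetoid n r α)) :=
  Quotient.ind fun w => ⟨Quotient.mk _ w, rfl⟩

theorem toBracelet_eq_iff (N N' : Necklace n r α) :
    N.toBracelet = N'.toBracelet ↔ N' = N ∨ N' = N.reflect := by
  obtain ⟨w, rfl⟩ := Quotient.exists_rep N
  obtain ⟨w', rfl⟩ := Quotient.exists_rep N'
  rw [eq_comm (a := Quotient.mk _ w'), eq_comm (b := reflect _)]
  exact Quotient.eq.trans (braceSetoid_iff.trans (or_congr Quotient.eq.symm Quotient.eq.symm))

theorem card_words (hgcd : Finset.univ.gcd α = 1) :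
    Nat.card (Words n r α) = Nat.card (Necklace n r α) * n := by
  have h := card_subtype_comp_eq_mul (Quotient.mk (neckSetoid n r α)) (p := fun _ => True)
    fun N _ => card_fiber hgcd N
  rwa [Nat.card_congr (Equiv.subtypeUnivEquiv fun _ => trivial),
    Nat.card_congr (Equiv.subtypeUnivEquiv fun _ => trivial)] at h

theorem card_reflSymm (hgcd : Finset.univ.gcd α = 1) :
    Nat.card {w : Words n r α // ReflSymm w} =
      Nat.card (fixedPoints (reflect : Necklace n r α → Necklace n r α)) * n := by
  have h := card_subtype_comp_eq_mul (Quotient.mk (neckSetoid n r α))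
    (p := IsFixedPt reflect) fun N _ => card_fiber hgcd N
  simp only [IsFixedPt, reflect_mk_eq_iff] at h
  exact h

theorem card_forall_reflSymm :
    Nat.card {N : Necklace n r α // ∀ w, Quotient.mk (neckSetoid n r α) w = N → ReflSymm w} =
      Nat.card (fixedPoints (reflect : Necklace n r α → Necklace n r α)) :=
  Nat.card_congr <| Equiv.subtypeEquivRight fun N => by
    simp only [← reflect_mk_eq_iff]
    exact ⟨fun h => N.exists_rep.elim fun w hw => hw ▸ h w hw, fun h _ hw => hw ▸ h⟩

theorem card_forall_not_reflSymm :
    Nat.card {b : Quotient (braceSetoid n r α) //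
        ∀ w : Words n r α, Quotient.mk (braceSetoid n r α) w = b → ¬ ReflSymm w} =
      Nat.card {b // ∀ N : Necklace n r α, N.toBracelet = b → N.reflect ≠ N} := by
  simp only [Quotient.forall, ne_eq, reflect_mk_eq_iff]
  rfl

theorem card_bracelet :
    Nat.card (Quotient (braceSetoid n r α)) =
      Nat.card (fixedPoints (reflect : Necklace n r α → Necklace n r α)) +
        Nat.card {b : Quotient (braceSetoid n r α) //
          ∀ w : Words n r α, Quotient.mk (braceSetoid n r α) w = b → ¬ ReflSymm w} := by
  rw [card_forall_not_reflSymm]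
  exact card_eq_card_fixedPoints_add reflect_involutive toBracelet_eq_iff toBracelet_surjective

theorem card_eq :
    Nat.card (Necklace n r α) =
      Nat.card (fixedPoints (reflect : Necklace n r α → Necklace n r α)) +
        2 * Nat.card {b : Quotient (braceSetoid n r α) //
          ∀ w : Words n r α, Quotient.mk (braceSetoid n r α) w = b → ¬ ReflSymm w} := by
  rw [card_forall_not_reflSymm]
  exact card_eq_card_fixedPoints_add_two_mul reflect_involutive toBracelet_eq_iff
    toBracelet_surjective

end Necklace

section Evaluation

open Polynomial

variable {C : ℤ[X]}

theorem eval_one_eq_card_necklace (hα : ∑ i, α i = n) (hgcd : Finset.univ.gcd α = 1)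
    (hC : qInt n * C * ∏ i, qFactorial (α i) = qFactorial n) :
    C.eval 1 = Nat.card (Necklace n r α) := by
  have hprod : ((∏ i, (α i).factorial : ℕ) : ℤ) ≠ 0 := by positivity
  have hn : (n : ℤ) ≠ 0 := Nat.cast_ne_zero.2 (NeZero.ne n)
  refine mul_left_cancel₀ hn (mul_right_cancel₀ hprod ?_)
  rw [eval_one_mul_prod_factorial hC, ← Words.card_mul_prod_factorial hα, Necklace.card_words hgcd]
  push_cast
  ring

theorem eval_neg_one_eq_card_fixedPoints (hα : ∑ i, α i = n) (hgcd : Finset.univ.gcd α = 1)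
    (hC : qInt n * C * ∏ i, qFactorial (α i) = qFactorial n) :
    C.eval (-1) = Nat.card (fixedPoints (Necklace.reflect : Necklace n r α → Necklace n r α)) := by
  have hprod : ((∏ i, (α i / 2).factorial : ℕ) : ℤ) ≠ 0 := by positivity
  have hn : (n : ℤ) ≠ 0 := Nat.cast_ne_zero.2 (NeZero.ne n)
  refine mul_left_cancel₀ hn (mul_right_cancel₀ hprod ?_)
  have hsymm := Words.card_reflSymm_mul_prod_factorial hα hgcd
  rw [Necklace.card_reflSymm hgcd] at hsymm
  rw [mul_assoc, eval_neg_one_mul_prod_factorial (NeZero.ne n) hα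
    (sum_mod_two_pos_of_gcd_eq_one hgcd) hC, mul_comm (n : ℤ) (Nat.card _ : ℤ)]
  exact_mod_cast hsymm.symm

end Evaluation

end Necklace

/-- **Theorem `braceletcount`**: for a composition `α` of `n` with `gcd(α) = 1`, writing
`C(α;q) = Σ aᵢ qⁱ = (1/[n]_q)·[n choose α]_q`, the sum `a₀+a₂+⋯ = ½(C(α;1)+C(α;−1))`
counts all bracelets, the sum `a₁+a₃+⋯ = ½(C(α;1)−C(α;−1))` counts asymmetric bracelets
(those that are `τ₀`-orbits of two necklaces, i.e. whose necklaces are not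
reflection-symmetric), and `C(α;−1)` counts the necklaces fixed by the reflection `τ₀`
(Stembridge's `q = −1` phenomenon). -/
theorem bracelet_count
    (n r : ℕ) [NeZero n] (α : Fin r → ℕ) (hsum : ∑ i, α i = n)
    (hgcd : Finset.univ.gcd α = 1)
    (C : Polynomial ℤ)
    (hC : qInt n * C * ∏ i, qFactorial (α i) = qFactorial n) :
    (∑ i ∈ Finset.range (C.natDegree + 1), (if Even i then C.coeff i else 0)) =
        Nat.card (Quotient (braceSetoid n r α)) ∧
    (∑ i ∈ Finset.range (C.natDegree + 1), (if ¬ Even i then C.coeff i else 0)) =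
        Nat.card {b : Quotient (braceSetoid n r α) //
          ∀ w : Words n r α, Quotient.mk (braceSetoid n r α) w = b → ¬ ReflSymm w} ∧
    C.eval 1 + C.eval (-1) = 2 * Nat.card (Quotient (braceSetoid n r α)) ∧
    C.eval 1 - C.eval (-1) = 2 * Nat.card {b : Quotient (braceSetoid n r α) //
          ∀ w : Words n r α, Quotient.mk (braceSetoid n r α) w = b → ¬ ReflSymm w} ∧
    C.eval (-1) = Nat.card {N : Quotient (neckSetoid n r α) //
          ∀ w : Words n r α, Quotient.mk (neckSetoid n r α) w = N → ReflSymm w} := by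
  have heval_one := eval_one_eq_card_necklace hsum hgcd hC
  have heval_neg_one := eval_neg_one_eq_card_fixedPoints hsum hgcd hC
  have hparity_one := eval_one_eq_sum_even_add_sum_odd C
  have hparity_neg_one := eval_neg_one_eq_sum_even_sub_sum_odd C
  have hnecklace := Necklace.card_eq (n := n) (α := α)
  have hbracelet := Necklace.card_bracelet (n := n) (α := α)
  rw [Necklace.card_forall_reflSymm]
  refine ⟨?_, ?_, ?_, ?_, heval_neg_one⟩ <;> omega
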